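/- There exists a constant C > 0 such that for every k ∈ ℤ²∖{0} and every a ≥ 0: Σ_{j₁, j₂ ∈ ℤ²∖{0}, j₁ + j₂ = k} 1/( |j₂| · (|j₁|² + |j₂|² + a²) ) ≤ C / √(|k|² + a²). (In the paper this is used with a² = |k_{2:n}|², yielding that the sum is bounded by C/|k_{1:n}|.) -/

import Mathlib

/-!
Since `|k|² ≤ 2 (|j₁|² + |j₂|²)`, the denominator `|j₁|² + |j₂|² + a²` is comparable to
`R² + |j₂|²` with `R² = |k|² + a²`. Hence the sum is at most three times
`∑_{x ≠ 0} 1 / (‖x‖ (R² + ‖x‖²))` for the sup norm `‖·‖` on `ℤ²`. The sphere of radius `n` has `8 n`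
points, which cancels the factor `‖x‖`, and `∑ 1 / (R² + n²) ≤ 2 / R` by comparison with a
telescoping series.
-/

open scoped Classical

noncomputable section

namespace SBE

/-- Squared Euclidean norm of a point of `ℤ²`. -/
def nsq (k : Fin 2 → ℤ) : ℝ := ∑ i, ((k i : ℝ))^2

section Norms

lemma exists_norm_eq_natCast {ι : Type*} [Fintype ι] (x : ι → ℤ) : ∃ n : ℕ, ‖x‖ = n := by
  refine ⟨Finset.univ.sup fun i ↦ (x i).natAbs, ?_⟩
  refine le_antisymm ((pi_norm_le_iff_of_nonneg (Nat.cast_nonneg _)).2 fun i ↦ ?_) ?_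
  · rw [Int.norm_eq_abs, ← Int.cast_abs, ← Nat.cast_natAbs, Nat.cast_le]
    exact Finset.le_sup (f := fun i ↦ (x i).natAbs) (Finset.mem_univ i)
  · rw [← Nat.le_floor_iff (norm_nonneg x), Finset.sup_le_iff]
    intro i _
    rw [Nat.le_floor_iff (norm_nonneg x), Nat.cast_natAbs, Int.cast_abs, ← Int.norm_eq_abs]
    exact norm_le_pi_norm x i

lemma nsq_nonneg (x : Fin 2 → ℤ) : 0 ≤ nsq x :=
  Finset.sum_nonneg fun _ _ ↦ sq_nonneg _

lemma sq_norm_le_nsq (x : Fin 2 → ℤ) : ‖x‖ ^ 2 ≤ nsq x := by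
  rw [← Real.le_sqrt (norm_nonneg x) (nsq_nonneg x)]
  refine (pi_norm_le_iff_of_nonneg (Real.sqrt_nonneg _)).2 fun i ↦ ?_
  rw [Int.norm_eq_abs]
  exact Real.abs_le_sqrt <|
    Finset.single_le_sum (f := fun i ↦ (x i : ℝ) ^ 2) (fun _ _ ↦ sq_nonneg _) (Finset.mem_univ i)

lemma nsq_pos {x : Fin 2 → ℤ} (hx : x ≠ 0) : 0 < nsq x :=
  (pow_pos (norm_pos_iff.2 hx) 2).trans_le (sq_norm_le_nsq x)

lemma nsq_add_le (x y : Fin 2 → ℤ) : nsq (x + y) ≤ 2 * (nsq x + nsq y) := by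
  simp only [nsq, Pi.add_apply, Int.cast_add, ← Finset.sum_add_distrib, Finset.mul_sum]
  exact Finset.sum_le_sum fun _ _ ↦ add_sq_le

end Norms

section RadialSums

open Finset

variable {ι : Type*} [Fintype ι] [DecidableEq ι]

lemma mem_Icc_neg_natCast_iff_norm_le {n : ℕ} {x : ι → ℤ} :
    x ∈ Icc (-n : ι → ℤ) n ↔ ‖x‖ ≤ n := by
  simp only [mem_Icc, Pi.le_def, ← forall_and, pi_norm_le_iff_of_nonneg n.cast_nonneg,
    Int.norm_eq_abs, ← Int.cast_abs, Pi.neg_apply, Pi.natCast_apply, ← abs_le]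
  exact_mod_cast Iff.rfl

lemma norm_eq_of_mem_box {n : ℕ} {x : ι → ℤ} (hx : x ∈ box n) : ‖x‖ = n := by
  cases n with
  | zero => simpa using hx
  | succ n =>
    rw [box_succ_eq_sdiff, mem_sdiff, mem_Icc_neg_natCast_iff_norm_le,
      mem_Icc_neg_natCast_iff_norm_le] at hx
    obtain ⟨m, hm⟩ := exists_norm_eq_natCast x
    rw [hm, Nat.cast_le, Nat.cast_le] at hx
    rw [hm, Nat.cast_inj]
    lia

lemma card_box_succ (n : ℕ) :
    #(box (n + 1) : Finset (ι → ℤ)) =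
      (2 * n + 3) ^ Fintype.card ι - (2 * n + 1) ^ Fintype.card ι := by
  have card_Icc (m : ℕ) : #(Icc (-m : ι → ℤ) m) = (2 * m + 1) ^ Fintype.card ι := by
    simp only [Pi.card_Icc, Pi.neg_apply, Pi.natCast_apply, Int.card_Icc, prod_const, card_univ]
    congr 1
    lia
  have card_add : #(box (n + 1) : Finset (ι → ℤ)) + (2 * n + 1) ^ Fintype.card ι =
      (2 * n + 3) ^ Fintype.card ι := by
    rw [← card_Icc n, ← card_disjUnion _ _ (disjoint_box_succ_prod n), box_succ_disjUnion, card_Icc]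
    rfl
  exact Nat.eq_sub_of_add_eq card_add

lemma card_box_succ_fin_two (n : ℕ) : #(box (n + 1) : Finset (Fin 2 → ℤ)) = 8 * (n + 1) := by
  rw [card_box_succ, Fintype.card_fin]
  exact Nat.sub_eq_of_eq_add (by ring)

lemma sum_Icc_comp_norm {M : Type*} [AddCommMonoid M] (f : ℝ → M) (N : ℕ) :
    ∑ x ∈ Icc (-N : ι → ℤ) N, f ‖x‖ = ∑ n ∈ range (N + 1), #(box n : Finset (ι → ℤ)) • f n := by
  have sum_box (n : ℕ) : ∑ x ∈ (box n : Finset (ι → ℤ)), f ‖x‖ =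
      #(box n : Finset (ι → ℤ)) • f n := by
    rw [← sum_const]
    exact sum_congr rfl fun x hx ↦ by rw [norm_eq_of_mem_box hx]
  induction N with
  | zero => simp
  | succ N ih =>
    rw [← Nat.succ_eq_add_one N, ← box_succ_disjUnion, sum_disjUnion, ih, sum_box,
      sum_range_succ _ (N + 1), add_comm]

lemma sum_comp_norm_le {f : ℝ → ℝ} {B : ℝ} (hf : ∀ n : ℕ, 0 ≤ f n)
    (hB : ∀ N : ℕ, ∑ n ∈ range (N + 1), #(box n : Finset (ι → ℤ)) • f n ≤ B)
    (s : Finset (ι → ℤ)) : ∑ x ∈ s, f ‖x‖ ≤ B := by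
  have hf' (x : ι → ℤ) : 0 ≤ f ‖x‖ := by
    obtain ⟨n, hn⟩ := exists_norm_eq_natCast x
    exact hn ▸ hf n
  obtain ⟨r, hr⟩ := (s.image norm).exists_le
  obtain ⟨N, hN⟩ := exists_nat_ge r
  have hs : s ⊆ Icc (-N : ι → ℤ) N := fun x hx ↦
    mem_Icc_neg_natCast_iff_norm_le.2 ((hr _ (mem_image_of_mem _ hx)).trans hN)
  calc ∑ x ∈ s, f ‖x‖
      ≤ ∑ x ∈ Icc (-N : ι → ℤ) N, f ‖x‖ := sum_le_sum_of_subset_of_nonneg hs fun x _ _ ↦ hf' x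
    _ ≤ B := (sum_Icc_comp_norm f N).trans_le (hB N)

end RadialSums

section Majorant

open Finset

variable {R : ℝ}

lemma one_div_sq_add_sq_le_sub (hR : 0 < R) {t : ℝ} (ht : 0 ≤ t) :
    1 / (R ^ 2 + (t + 1) ^ 2) ≤ 2 / (R + t) - 2 / (R + (t + 1)) := by
  have hsub : 2 / (R + t) - 2 / (R + (t + 1)) = 2 / ((R + t) * (R + (t + 1))) := by
    field_simp
    ring
  rw [hsub, div_le_div_iff₀ (by positivity) (by positivity), one_mul]
  calc (R + t) * (R + (t + 1))
      ≤ (R + (t + 1)) ^ 2 := by rw [sq]; gcongr; linarith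
    _ ≤ 2 * (R ^ 2 + (t + 1) ^ 2) := add_sq_le

lemma sum_range_one_div_sq_add_sq_le (hR : 0 < R) (N : ℕ) :
    ∑ n ∈ range N, 1 / (R ^ 2 + ((n : ℝ) + 1) ^ 2) ≤ 2 / R :=
  calc ∑ n ∈ range N, 1 / (R ^ 2 + ((n : ℝ) + 1) ^ 2)
      ≤ ∑ n ∈ range N, (2 / (R + n) - 2 / (R + ((n + 1 : ℕ) : ℝ))) :=
        sum_le_sum fun n _ ↦ by
          simpa only [Nat.cast_succ] using one_div_sq_add_sq_le_sub hR n.cast_nonneg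
    _ = 2 / R - 2 / (R + N) := by
        rw [sum_range_sub' (fun n : ℕ ↦ 2 / (R + n)), Nat.cast_zero, add_zero]
    _ ≤ 2 / R := sub_le_self _ (by positivity)

-- The term at `x = 0` is `1 / 0 = 0`.
lemma sum_one_div_norm_mul_le (hR : 0 < R) (s : Finset (Fin 2 → ℤ)) :
    ∑ x ∈ s, 1 / (‖x‖ * (R ^ 2 + ‖x‖ ^ 2)) ≤ 16 / R := by
  refine sum_comp_norm_le (f := fun r ↦ 1 / (r * (R ^ 2 + r ^ 2)))
    (fun n ↦ by positivity) (fun N ↦ ?_) s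
  have sphere_sum (n : ℕ) :
      #(box (n + 1) : Finset (Fin 2 → ℤ)) •
          (1 / (((n + 1 : ℕ) : ℝ) * (R ^ 2 + ((n + 1 : ℕ) : ℝ) ^ 2))) =
        8 * (1 / (R ^ 2 + ((n : ℝ) + 1) ^ 2)) := by
    rw [card_box_succ_fin_two, nsmul_eq_mul]
    push_cast
    field_simp
  rw [sum_range_succ', Nat.cast_zero, zero_mul, div_zero, smul_zero, add_zero,
    sum_congr rfl fun n _ ↦ sphere_sum n, ← mul_sum]
  calc 8 * ∑ n ∈ range N, 1 / (R ^ 2 + ((n : ℝ) + 1) ^ 2)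
      ≤ 8 * (2 / R) := by gcongr; exact sum_range_one_div_sq_add_sq_le hR N
    _ = 16 / R := by ring

lemma summable_one_div_norm_mul (hR : 0 < R) :
    Summable fun x : Fin 2 → ℤ ↦ 1 / (‖x‖ * (R ^ 2 + ‖x‖ ^ 2)) :=
  summable_of_sum_le (fun _ ↦ by positivity) (sum_one_div_norm_mul_le hR)

lemma tsum_one_div_norm_mul_le (hR : 0 < R) :
    ∑' x : Fin 2 → ℤ, 1 / (‖x‖ * (R ^ 2 + ‖x‖ ^ 2)) ≤ 16 / R :=
  Real.tsum_le_of_sum_le (fun _ ↦ by positivity) (sum_one_div_norm_mul_le hR)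

lemma summable_one_div_norm_sub_mul (hR : 0 < R) (k : Fin 2 → ℤ) :
    Summable fun j ↦ 1 / (‖k - j‖ * (R ^ 2 + ‖k - j‖ ^ 2)) :=
  (Equiv.subLeft k).summable_iff.2 (summable_one_div_norm_mul hR)

lemma tsum_one_div_norm_sub_mul_le (hR : 0 < R) (k : Fin 2 → ℤ) :
    ∑' j, 1 / (‖k - j‖ * (R ^ 2 + ‖k - j‖ ^ 2)) ≤ 16 / R :=
  ((Equiv.subLeft k).tsum_eq fun x ↦ 1 / (‖x‖ * (R ^ 2 + ‖x‖ ^ 2))).trans_le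
    (tsum_one_div_norm_mul_le hR)

end Majorant

section Summand

lemma one_div_sqrt_nsq_mul_le (x : Fin 2 → ℤ) {y : Fin 2 → ℤ} (hy : y ≠ 0) (a : ℝ) :
    1 / (√(nsq y) * (nsq x + nsq y + a ^ 2)) ≤
      3 * (1 / (‖y‖ * (nsq (x + y) + a ^ 2 + ‖y‖ ^ 2))) := by
  have hx0 := nsq_nonneg x
  have hy0 := nsq_pos hy
  have hxy0 := nsq_nonneg (x + y)
  have hsqrt : ‖y‖ ≤ √(nsq y) := Real.le_sqrt_of_sq_le (sq_norm_le_nsq y)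
  have hdenom : nsq (x + y) + a ^ 2 + ‖y‖ ^ 2 ≤ 3 * (nsq x + nsq y + a ^ 2) := by
    linarith [nsq_add_le x y, sq_norm_le_nsq y, sq_nonneg a]
  rw [mul_one_div, div_le_div_iff₀ (by positivity) (by positivity), one_mul]
  calc ‖y‖ * (nsq (x + y) + a ^ 2 + ‖y‖ ^ 2)
      ≤ √(nsq y) * (3 * (nsq x + nsq y + a ^ 2)) := by gcongr
    _ = 3 * (√(nsq y) * (nsq x + nsq y + a ^ 2)) := by ring

/-- The summand `1 / (|j₂| (|j₁|² + |j₂|² + a²))` of the theorem as a function of `j = j₁`, where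
`j₂ = k - j`, extended by zero to all of `ℤ²`. -/
def summand (k : Fin 2 → ℤ) (a : ℝ) (j : Fin 2 → ℤ) : ℝ :=
  if j ≠ 0 ∧ k - j ≠ 0 then
    1 / (√(nsq (k - j)) * (nsq j + nsq (k - j) + a ^ 2)) else 0

lemma summand_nonneg (k : Fin 2 → ℤ) (a : ℝ) (j : Fin 2 → ℤ) : 0 ≤ summand k a j := by
  have := nsq_nonneg j
  have := nsq_nonneg (k - j)
  unfold summand
  positivity

lemma summand_le (k : Fin 2 → ℤ) (a : ℝ) (j : Fin 2 → ℤ) :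
    summand k a j ≤ 3 * (1 / (‖k - j‖ * (√(nsq k + a ^ 2) ^ 2 + ‖k - j‖ ^ 2))) := by
  unfold summand
  split_ifs with hj
  · rw [Real.sq_sqrt (add_nonneg (nsq_nonneg k) (sq_nonneg a))]
    simpa only [add_sub_cancel] using one_div_sqrt_nsq_mul_le j hj.2 a
  · positivity

variable {k : Fin 2 → ℤ} {a : ℝ}

lemma summable_summand (h : 0 < nsq k + a ^ 2) : Summable (summand k a) :=
  ((summable_one_div_norm_sub_mul (Real.sqrt_pos.2 h) k).mul_left 3).of_nonneg_of_le
    (summand_nonneg k a) (summand_le k a)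

lemma tsum_summand_le (h : 0 < nsq k + a ^ 2) :
    ∑' j, summand k a j ≤ 48 / √(nsq k + a ^ 2) := by
  set R := √(nsq k + a ^ 2)
  have hR : 0 < R := Real.sqrt_pos.2 h
  calc ∑' j, summand k a j
      ≤ ∑' j, 3 * (1 / (‖k - j‖ * (R ^ 2 + ‖k - j‖ ^ 2))) :=
        (summable_summand h).tsum_le_tsum (summand_le k a)
          ((summable_one_div_norm_sub_mul hR k).mul_left 3)
    _ = 3 * ∑' j, 1 / (‖k - j‖ * (R ^ 2 + ‖k - j‖ ^ 2)) := tsum_mul_left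
    _ ≤ 3 * (16 / R) := by gcongr; exact tsum_one_div_norm_sub_mul_le hR k
    _ = 48 / R := by ring

end Summand

/-- There is `C > 0` such that for every `k ∈ ℤ² \ {0}` and every
`a ≥ 0`, `Σ_{j₁+j₂=k, j₁,j₂ ≠ 0} 1/(|j₂|(|j₁|²+|j₂|²+a²)) ≤ C/√(|k|²+a²)`
(the sum being over `j₁`, with `j₂ = k − j₁`). -/
theorem stmt7 :
    ∃ C : ℝ, 0 < C ∧ ∀ k : Fin 2 → ℤ, k ≠ 0 → ∀ a : ℝ, 0 ≤ a →
      Summable (fun j : Fin 2 → ℤ =>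
        if j ≠ 0 ∧ k - j ≠ 0 then
          1 / (Real.sqrt (nsq (k - j)) * (nsq j + nsq (k - j) + a^2)) else 0) ∧
      (∑' j : Fin 2 → ℤ,
        if j ≠ 0 ∧ k - j ≠ 0 then
          1 / (Real.sqrt (nsq (k - j)) * (nsq j + nsq (k - j) + a^2)) else 0)
        ≤ C / Real.sqrt (nsq k + a^2) := by
  refine ⟨48, by norm_num, fun k hk a _ ↦ ?_⟩
  have h : 0 < nsq k + a ^ 2 := add_pos_of_pos_of_nonneg (nsq_pos hk) (sq_nonneg a)
  exact ⟨summable_summand h, tsum_summand_le h⟩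

end SBE
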